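/- arXiv:1705.08499 — 3 statements merged into one kernel-verified Lean document; each statement's English description precedes it below -/
import Mathlib

section
/- Let a, b, c, d be nonnegative reals with a + b + c + d = 1, b + c ≤ a + d, b + c > 0, and a + d > 0. Then the prediction advantage PA = (b − a)/(b + c) satisfies PA ≤ TN, where TN = d/(a + d) is the true negative rate; moreover the inequality is strict whenever c > 0. -/
/-!
Complementing both sides turns the claim into `a / (a + d) ≤ (a + c) / (b + c)`: the false positive
rate is at most the error of `f` relative to the error `b + c` of the constant majority classifier.
Passing from left to right, the numerator grows by `c` and the denominator does not increase,
because label `1` is the minority class.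
-/

section Field

variable {K : Type*} [Field K]

theorem sub_div_add_eq_one_sub (a : K) {b c : K} (h : b + c ≠ 0) :
    (b - a) / (b + c) = 1 - (a + c) / (b + c) := by
  rw [one_sub_div h, add_sub_add_right_eq_sub]

theorem div_add_eq_one_sub {a d : K} (h : a + d ≠ 0) : d / (a + d) = 1 - a / (a + d) := by
  rw [one_sub_div h, add_sub_cancel_left]

theorem pa_le_tn_general [LinearOrder K] [IsStrictOrderedRing K] {a b c d : K}
    (ha : 0 ≤ a) (hc : 0 ≤ c) (himb : b + c ≤ a + d) (hbc : 0 < b + c) :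
    (b - a) / (b + c) ≤ d / (a + d)
    ∧ (0 < c → (b - a) / (b + c) < d / (a + d)) := by
  have had : 0 < a + d := hbc.trans_le himb
  have herr : 0 ≤ a + c := add_nonneg ha hc
  rw [sub_div_add_eq_one_sub a hbc.ne', div_add_eq_one_sub had.ne', sub_le_sub_iff_left,
    sub_lt_sub_iff_left]
  exact ⟨div_le_div₀ herr (le_add_of_nonneg_right hc) hbc himb,
    fun hc' ↦ div_lt_div₀ (lt_add_of_pos_right a hc') himb herr hbc⟩

end Field

/-- The prediction advantage lower-bounds the true negative rate, strictly when `c > 0`. -/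
theorem pa_le_tn (a b c d : ℝ)
    (ha : 0 ≤ a) (hb : 0 ≤ b) (hc : 0 ≤ c) (hd : 0 ≤ d)
    (hsum : a + b + c + d = 1) (himb : b + c ≤ a + d)
    (hbc : 0 < b + c) (had : 0 < a + d) :
    (b - a) / (b + c) ≤ d / (a + d)
    ∧ (0 < c → (b - a) / (b + c) < d / (a + d)) :=
  pa_le_tn_general ha hc himb hbc
end

section
/- Let a, b, c, d be nonnegative reals with a + b + c + d = 1, b + c ≤ a + d, b + c > 0, and a + d > 0. Then the prediction advantage PA = (b − a)/(b + c) satisfies PA ≤ (TP + TN)/2, where TP = b/(b + c) and TN = d/(a + d); moreover the inequality is strict whenever a > 0 or c > 0 (equivalently, whenever TP < 1 or TN < 1). -/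
/-!
Youden's index `J = TP + TN - 1` interpolates between the two quantities. The prediction advantage
is `TP - a / (b + c)`, whereas `J = TP - a / (a + d)`: the former charges the false positives
against the minority class, the latter against the majority class, so `PA ≤ J`. On the other hand,
`(TP + TN) / 2 - J` is the average of the two error rates `1 - TP` and `1 - TN`.
-/

section YoudenIndex

variable {K : Type*} [Field K]

/-- Youden's index (informedness) of a binary classifier, as a function of its true positive rate
`x` and its true negative rate `y`. It is the intermediate term between the prediction advantage
and the balanced accuracy. -/
def youdenIndex (x y : K) : K := x + y - 1

theorem youdenIndex_eq_sub_div {a d : K} (had : a + d ≠ 0) (x : K) :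
    youdenIndex x (d / (a + d)) = x - a / (a + d) := by
  have one_sub_fpr : 1 - a / (a + d) = d / (a + d) := by
    rw [one_sub_div had, add_sub_cancel_left]
  rw [youdenIndex, ← one_sub_fpr]
  ring

variable [LinearOrder K] [IsStrictOrderedRing K]

theorem youdenIndex_le_half_add {x y : K} (hx : x ≤ 1) (hy : y ≤ 1) :
    youdenIndex x y ≤ (x + y) / 2 := by
  unfold youdenIndex
  linarith

theorem youdenIndex_lt_half_add_iff {x y : K} (hx : x ≤ 1) (hy : y ≤ 1) :
    youdenIndex x y < (x + y) / 2 ↔ x < 1 ∨ y < 1 := by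
  unfold youdenIndex
  constructor
  · intro h
    by_contra! hxy
    linarith [hxy.1, hxy.2]
  · rintro (h | h) <;> linarith

theorem sub_div_le_youdenIndex {a b c d : K} (ha : 0 ≤ a) (hbc : 0 < b + c)
    (himb : b + c ≤ a + d) :
    (b - a) / (b + c) ≤ youdenIndex (b / (b + c)) (d / (a + d)) := by
  rw [youdenIndex_eq_sub_div (hbc.trans_le himb).ne', sub_div]
  gcongr

end YoudenIndex

theorem pa_le_balanced_accuracy_general {K : Type*} [Field K] [LinearOrder K]
    [IsStrictOrderedRing K] {a b c d : K} (ha : 0 ≤ a) (hc : 0 ≤ c)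
    (himb : b + c ≤ a + d) (hbc : 0 < b + c) :
    (b - a) / (b + c) ≤ (b / (b + c) + d / (a + d)) / 2
    ∧ (0 < a ∨ 0 < c → (b - a) / (b + c) < (b / (b + c) + d / (a + d)) / 2) := by
  have had : 0 < a + d := hbc.trans_le himb
  have tpr_le_one : b / (b + c) ≤ 1 := (div_le_one hbc).2 (le_add_of_nonneg_right hc)
  have tnr_le_one : d / (a + d) ≤ 1 := (div_le_one had).2 (le_add_of_nonneg_left ha)
  have pa_le_youden := sub_div_le_youdenIndex ha hbc himb
  refine ⟨pa_le_youden.trans (youdenIndex_le_half_add tpr_le_one tnr_le_one), fun h => ?_⟩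
  refine pa_le_youden.trans_lt ((youdenIndex_lt_half_add_iff tpr_le_one tnr_le_one).2 ?_)
  rcases h with a_pos | c_pos
  · exact .inr ((div_lt_one had).2 (lt_add_of_pos_left d a_pos))
  · exact .inl ((div_lt_one hbc).2 (lt_add_of_pos_right b c_pos))

/-- The prediction advantage lower-bounds the balanced accuracy `(TP + TN)/2`,
strictly when `a > 0` or `c > 0`. -/
theorem pa_le_balanced_accuracy (a b c d : ℝ)
    (ha : 0 ≤ a) (hb : 0 ≤ b) (hc : 0 ≤ c) (hd : 0 ≤ d)
    (hsum : a + b + c + d = 1) (himb : b + c ≤ a + d)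
    (hbc : 0 < b + c) (had : 0 < a + d) :
    (b - a) / (b + c) ≤ (b / (b + c) + d / (a + d)) / 2
    ∧ (0 < a ∨ 0 < c → (b - a) / (b + c) < (b / (b + c) + d / (a + d)) / 2) :=
  pa_le_balanced_accuracy_general ha hc himb hbc
end

section
/- Let a, b, c, d be nonnegative reals with a + b + c + d = 1, b + c ≤ a + d, b + c > 0, a + b > 0, and b > 0. Then the prediction advantage PA = (b − a)/(b + c) satisfies PA ≤ F, where F = 2·PRE·REC/(PRE + REC) = 2b/(a + 2b + c) is the F-measure with PRE = b/(a + b) and REC = b/(b + c); moreover the inequality is strict whenever a > 0 (equivalently, whenever PRE < 1). -/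
/-!
Since `F` is the harmonic mean of `b / (a + b)` and `b / (b + c)`, it equals `2b / (a + 2b + c)`.
The numerator of its difference with the prediction advantage then factors:
`2b(b + c) - (b - a)(a + 2b + c) = (a + b)(a + c)`, so the sign of `F - PA` is that of the error
probability `a + c`.
-/

section Field

variable {K : Type*} [Field K] {a b c : K}

/-- The harmonic mean of two numbers; it takes the junk value `0` when `x + y = 0`. -/
def harmonicMean (x y : K) : K := 2 * x * y / (x + y)

/-- The precision of a classifier with false positive mass `a` and true positive mass `b`. -/
def classifierPrecision (a b : K) : K := b / (a + b)

/-- The recall of a classifier with true positive mass `b` and false negative mass `c`. -/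
def classifierRecall (b c : K) : K := b / (b + c)

/-- The F-measure of a classifier with false positive, true positive and false negative masses
`a`, `b` and `c`. -/
def fMeasure (a b c : K) : K :=
  harmonicMean (classifierPrecision a b) (classifierRecall b c)

/-- The prediction advantage for the 0-1 loss, in terms of the false positive, true positive and
false negative masses `a`, `b` and `c`. It is `1 - (a + c) / (b + c)`, where `a + c` is the error
of the classifier and `b + c` that of the constant prediction of the majority label `-1`. -/
def predictionAdvantage (a b c : K) : K := (b - a) / (b + c)

theorem harmonicMean_div_div {x y : K} (hb : b ≠ 0) (hx : x ≠ 0) (hy : y ≠ 0) :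
    harmonicMean (b / x) (b / y) = 2 * b / (x + y) :=
  calc
    2 * (b / x) * (b / y) / (b / x + b / y)
      = (b * (2 * b) / (x * y)) / (b * (x + y) / (x * y)) := by
        congr 1 <;> field_simp
        ring
    _ = b * (2 * b) / (b * (x + y)) := div_div_div_cancel_right₀ (mul_ne_zero hx hy) _ _
    _ = 2 * b / (x + y) := mul_div_mul_left _ _ hb

theorem fMeasure_eq_div (hb : b ≠ 0) (hab : a + b ≠ 0) (hbc : b + c ≠ 0) :
    fMeasure a b c = 2 * b / (a + 2 * b + c) := by
  rw [fMeasure, classifierPrecision, classifierRecall, harmonicMean_div_div hb hab hbc]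
  ring

theorem fMeasure_sub_predictionAdvantage (hb : b ≠ 0) (hab : a + b ≠ 0) (hbc : b + c ≠ 0)
    (habc : a + 2 * b + c ≠ 0) :
    fMeasure a b c - predictionAdvantage a b c =
      (a + b) * (a + c) / ((a + 2 * b + c) * (b + c)) := by
  rw [fMeasure_eq_div hb hab hbc, predictionAdvantage, div_sub_div _ _ habc hbc]
  ring

end Field

theorem pa_le_f_measure_general {K : Type*} [Field K] [LinearOrder K] [IsStrictOrderedRing K]
    {a b c : K} (hb : b ≠ 0) (hab : 0 < a + b) (hbc : 0 < b + c) :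
    (predictionAdvantage a b c ≤ fMeasure a b c ↔ 0 ≤ a + c) ∧
      (predictionAdvantage a b c < fMeasure a b c ↔ 0 < a + c) := by
  have habc : 0 < a + 2 * b + c := by linarith
  have hden : 0 < (a + 2 * b + c) * (b + c) := mul_pos habc hbc
  rw [← sub_nonneg, ← sub_pos (a := fMeasure a b c),
    fMeasure_sub_predictionAdvantage hb hab.ne' hbc.ne' habc.ne']
  constructor
  · rw [le_div_iff₀ hden, zero_mul, mul_nonneg_iff_of_pos_left hab]
  · rw [div_pos_iff_of_pos_right hden, mul_pos_iff_of_pos_left hab]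

/-- The prediction advantage lower-bounds the F-measure (the harmonic mean of precision
and recall), strictly when `a > 0`. -/
theorem pa_le_f_measure (a b c d : ℝ)
    (ha : 0 ≤ a) (hb : 0 ≤ b) (hc : 0 ≤ c) (hd : 0 ≤ d)
    (hsum : a + b + c + d = 1) (himb : b + c ≤ a + d)
    (hbc : 0 < b + c) (hab : 0 < a + b) (hbpos : 0 < b) :
    (b - a) / (b + c)
        ≤ 2 * (b / (a + b)) * (b / (b + c)) / (b / (a + b) + b / (b + c))
    ∧ (0 < a →
        (b - a) / (b + c)
          < 2 * (b / (a + b)) * (b / (b + c)) / (b / (a + b) + b / (b + c))) := by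
  obtain ⟨hle, hlt⟩ := pa_le_f_measure_general hbpos.ne' hab hbc
  exact ⟨hle.2 (add_nonneg ha hc), fun ha_pos ↦ hlt.2 (add_pos_of_pos_of_nonneg ha_pos hc)⟩
end
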